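/- (Closed-form pairwise jump vector, general stiffnesses.) Fix n ≥ 2, indices α ≠ β, reals φ_1,…,φ_n ≥ 0 with Σφ_i = 1 and φ_α, φ_β > 0, s = φ_α + φ_β; fix symmetric d×d matrices ε (total strain), ε_i for i ≠ α, β (strains of the other phase-fields), Bain strains ε_α^B, ε_β^B; fix stiffness tensors C_α, C_β and a unit vector n̂ ∈ ℝ^d. Define the pairwise strains ε_{αβ}(a) = s⁻¹[ε − φ_β (a ⊗ n̂)ˢʸᵐ − Σ_{i≠α,β} φ_i ε_i] and ε_{βα}(a) = s⁻¹[ε + φ_α (a ⊗ n̂)ˢʸᵐ − Σ_{i≠α,β} φ_i ε_i], and the pairwise interface energy E(a) = (φ_α/s)·½⟨ε_{αβ}(a) − ε_α^B, C_α(ε_{αβ}(a) − ε_α^B)⟩ + (φ_β/s)·½⟨ε_{βα}(a) − ε_β^B, C_β(ε_{βα}(a) − ε_β^B)⟩. Then E has a unique global minimizer, given explicitly by a* = −Q⁻¹ · ([C_β(ε − Σ_{i≠α,β} φ_i ε_i − s ε_β^B) − C_α(ε − Σ_{i≠α,β} φ_i ε_i − s ε_α^B)] n̂), where Q is the acoustic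 tensor of φ_β C_α + φ_α C_β, i.e. Q a = ((φ_β C_α + φ_α C_β)[(a ⊗ n̂)ˢʸᵐ]) n̂. -/

import Mathlib

open Matrix BigOperators Finset

/-- The Frobenius inner product `⟨A, B⟩ = tr (A Bᵀ)`. -/
noncomputable def frob {d : ℕ} (A B : Matrix (Fin d) (Fin d) ℝ) : ℝ := (A * Bᵀ).trace

/-- The symmetric part `Aˢʸᵐ = (A + Aᵀ)/2`. -/
noncomputable def symPart {d : ℕ} (A : Matrix (Fin d) (Fin d) ℝ) :
    Matrix (Fin d) (Fin d) ℝ := (1 / 2 : ℝ) • (A + Aᵀ)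

/-- A stiffness tensor: self-adjoint for the Frobenius inner product, `C A = C(Aˢʸᵐ)`
symmetric for every `A`, and positive definite on nonzero symmetric matrices. -/
def IsStiffness {d : ℕ}
    (C : Matrix (Fin d) (Fin d) ℝ →ₗ[ℝ] Matrix (Fin d) (Fin d) ℝ) : Prop :=
  (∀ A B, frob (C A) B = frob A (C B)) ∧
  (∀ A, C A = C (symPart A)) ∧
  (∀ A, (C A)ᵀ = C A) ∧
  (∀ S : Matrix (Fin d) (Fin d) ℝ, Sᵀ = S → S ≠ 0 → 0 < frob S (C S))

/-- The pairwise interface energy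
`E(a) = (φ_α/s)·½⟨ε_{αβ}(a) − ε_α^B, C_α(ε_{αβ}(a) − ε_α^B)⟩
      + (φ_β/s)·½⟨ε_{βα}(a) − ε_β^B, C_β(ε_{βα}(a) − ε_β^B)⟩`,
with `ε_{αβ}(a) = s⁻¹[G − φ_β (a ⊗ n̂)ˢʸᵐ]`, `ε_{βα}(a) = s⁻¹[G + φ_α (a ⊗ n̂)ˢʸᵐ]`,
`s = φ_α + φ_β` and `G` the total strain minus the strain contribution of the other
phase-fields. -/
noncomputable def pairEnergy {d : ℕ}
    (Cα Cβ : Matrix (Fin d) (Fin d) ℝ →ₗ[ℝ] Matrix (Fin d) (Fin d) ℝ)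
    (εαB εβB : Matrix (Fin d) (Fin d) ℝ) (φα φβ : ℝ)
    (G : Matrix (Fin d) (Fin d) ℝ) (nh a : Fin d → ℝ) : ℝ :=
  (φα / (φα + φβ)) * ((1 / 2) *
      frob ((φα + φβ)⁻¹ • (G - φβ • symPart (vecMulVec a nh)) - εαB)
        (Cα ((φα + φβ)⁻¹ • (G - φβ • symPart (vecMulVec a nh)) - εαB)))
    + (φβ / (φα + φβ)) * ((1 / 2) *
      frob ((φα + φβ)⁻¹ • (G + φα • symPart (vecMulVec a nh)) - εβB)
        (Cβ ((φα + φβ)⁻¹ • (G + φα • symPart (vecMulVec a nh)) - εβB)))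

/-!
With `η = (v ⊗ n)ˢʸᵐ`, replacing `a` by `a + v` shifts the two pairwise strains by `-(φ_β/s) η` and
`(φ_α/s) η`. In the expansion of the energy, the linear term is therefore proportional to the jump
`⟨η, σ_β - σ_α⟩ = v · (σ_β - σ_α) n` of the tractions, and the quadratic one to `v · Q v`. Since
`s (σ_β - σ_α) n` equals `Q a` plus a vector independent of `a`, the tractions agree at exactly one
`a`, because `Q` is positive definite, and there only the quadratic term is left.
-/

section Quadratic

variable {ι K : Type*} [Fintype ι] [Field K]

theorem surjective_of_dotProduct_anisotropic {Q : (ι → K) →ₗ[K] (ι → K)}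
    (hQ : ∀ v, v ⬝ᵥ Q v = 0 → v = 0) : Function.Surjective Q := by
  refine LinearMap.injective_iff_surjective.mp ((injective_iff_map_eq_zero Q).mpr fun v hv => ?_)
  exact hQ v (by rw [hv, dotProduct_zero])

theorem exists_strict_minimizer_of_quadratic_expansion [LinearOrder K] [IsStrictOrderedRing K]
    {f : (ι → K) → K} {Q : (ι → K) →ₗ[K] (ι → K)} {r : ι → K} {κ : K} (hκ : 0 < κ)
    (hQ : ∀ v, v ≠ 0 → 0 < v ⬝ᵥ Q v)
    (hf : ∀ a v, f (a + v) = f a + κ * (v ⬝ᵥ (Q a + r) + 1 / 2 * (v ⬝ᵥ Q v))) :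
    ∃ a, Q a = -r ∧ ∀ b, b ≠ a → f a < f b := by
  have hsurj : Function.Surjective Q := surjective_of_dotProduct_anisotropic fun v hv =>
    not_not.mp fun hne => (hQ v hne).ne' hv
  obtain ⟨a, ha⟩ := hsurj (-r)
  refine ⟨a, ha, fun b hb => ?_⟩
  have hpos := hQ (b - a) (sub_ne_zero.mpr hb)
  calc f a < f a + κ * (1 / 2 * ((b - a) ⬝ᵥ Q (b - a))) := lt_add_of_pos_right _ (by positivity)
    _ = f (a + (b - a)) := by rw [hf, ha, neg_add_cancel, dotProduct_zero, zero_add]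
    _ = f b := by rw [add_sub_cancel]

end Quadratic

section SymmetricPart

variable {d : ℕ} (A B M : Matrix (Fin d) (Fin d) ℝ)

theorem frob_comm : frob A B = frob B A := by
  rw [frob, frob, ← trace_transpose, transpose_mul, transpose_transpose]

theorem frob_add_left : frob (A + B) M = frob A M + frob B M := by
  simp [frob, Matrix.add_mul]

theorem frob_add_right : frob A (B + M) = frob A B + frob A M := by
  simp [frob, Matrix.mul_add]

theorem frob_sub_right : frob A (B - M) = frob A B - frob A M := by
  simp [frob, Matrix.mul_sub]

theorem frob_smul_left (c : ℝ) : frob (c • A) B = c * frob A B := by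
  simp [frob]

theorem frob_smul_right (c : ℝ) : frob A (c • B) = c * frob A B := by
  simp [frob]

theorem frob_transpose_transpose : frob Aᵀ Bᵀ = frob A B := by
  rw [frob, frob, ← transpose_mul, trace_transpose, trace_mul_comm]

theorem frob_vecMulVec (a n : Fin d → ℝ) : frob (vecMulVec a n) M = a ⬝ᵥ M *ᵥ n := by
  rw [frob, vecMulVec_mul, trace_vecMulVec, vecMul_transpose]

theorem symPart_add : symPart (A + B) = symPart A + symPart B := by
  simp only [symPart, transpose_add]
  module

theorem symPart_smul (c : ℝ) : symPart (c • A) = c • symPart A := by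
  simp only [symPart, transpose_smul]
  module

theorem isSymm_symPart : (symPart A).IsSymm :=
  (isSymm_add_transpose_self A).smul _

variable {M} in
theorem frob_symPart_left (hM : M.IsSymm) : frob (symPart A) M = frob A M := by
  have hT : frob Aᵀ M = frob A M := by rw [← frob_transpose_transpose A M, hM.eq]
  rw [symPart, frob_smul_left, frob_add_left, hT]
  ring

variable {M} in
theorem frob_symPart_vecMulVec (hM : M.IsSymm)
    (a n : Fin d → ℝ) : frob (symPart (vecMulVec a n)) M = a ⬝ᵥ M *ᵥ n := by
  rw [frob_symPart_left _ hM, frob_vecMulVec]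

theorem symPart_vecMulVec_mulVec (a n m : Fin d → ℝ) :
    symPart (vecMulVec a n) *ᵥ m = (1 / 2 : ℝ) • ((n ⬝ᵥ m) • a + (a ⬝ᵥ m) • n) := by
  simp [symPart, transpose_vecMulVec, smul_mulVec, add_mulVec, vecMulVec_mulVec]

theorem symPart_vecMulVec_ne_zero {a n : Fin d → ℝ} (ha : a ≠ 0) (hn : n ≠ 0) :
    symPart (vecMulVec a n) ≠ 0 := by
  intro h
  have haa : 0 < a ⬝ᵥ a := by simpa using dotProduct_self_star_pos_iff.mpr ha
  have hnn : 0 < n ⬝ᵥ n := by simpa using dotProduct_self_star_pos_iff.mpr hn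
  have hzero : a ⬝ᵥ symPart (vecMulVec a n) *ᵥ n = 0 := by simp [h]
  have hpos : 0 < 1 / 2 * ((n ⬝ᵥ n) * (a ⬝ᵥ a) + (a ⬝ᵥ n) * (a ⬝ᵥ n)) := by
    linarith [mul_pos hnn haa, mul_self_nonneg (a ⬝ᵥ n)]
  refine hpos.ne' ?_
  rw [← hzero, symPart_vecMulVec_mulVec]
  simp only [dotProduct_smul, dotProduct_add, smul_eq_mul]

end SymmetricPart

section AcousticTensor

variable {d : ℕ}

/-- The acoustic tensor `a ↦ C[(a ⊗ n)ˢʸᵐ] n` of `C` in the direction `n`, as a linear map on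
`ℝ^d`; `n` need not be a unit vector. -/
noncomputable def acousticTensor
    (C : Matrix (Fin d) (Fin d) ℝ →ₗ[ℝ] Matrix (Fin d) (Fin d) ℝ) (n : Fin d → ℝ) :
    (Fin d → ℝ) →ₗ[ℝ] (Fin d → ℝ) where
  toFun a := C (symPart (vecMulVec a n)) *ᵥ n
  map_add' a b := by rw [add_vecMulVec, symPart_add, map_add, add_mulVec]
  map_smul' c a := by
    rw [smul_vecMulVec, symPart_smul, map_smul, smul_mulVec, RingHom.id_apply]

variable {C D : Matrix (Fin d) (Fin d) ℝ →ₗ[ℝ] Matrix (Fin d) (Fin d) ℝ}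

theorem IsStiffness.add (hC : IsStiffness C) (hD : IsStiffness D) : IsStiffness (C + D) := by
  obtain ⟨hCadj, hCsym, hCT, hCpos⟩ := hC
  obtain ⟨hDadj, hDsym, hDT, hDpos⟩ := hD
  refine ⟨fun A B => ?_, fun A => ?_, fun A => ?_, fun S hS hS0 => ?_⟩
  · rw [LinearMap.add_apply, LinearMap.add_apply, frob_add_left, frob_add_right, hCadj, hDadj]
  · rw [LinearMap.add_apply, hCsym, hDsym, LinearMap.add_apply]
  · rw [LinearMap.add_apply, transpose_add, hCT, hDT]
  · rw [LinearMap.add_apply, frob_add_right]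
    exact add_pos (hCpos S hS hS0) (hDpos S hS hS0)

theorem IsStiffness.smul (hC : IsStiffness C) {c : ℝ} (hc : 0 < c) : IsStiffness (c • C) := by
  obtain ⟨hCadj, hCsym, hCT, hCpos⟩ := hC
  refine ⟨fun A B => ?_, fun A => ?_, fun A => ?_, fun S hS hS0 => ?_⟩
  · rw [LinearMap.smul_apply, LinearMap.smul_apply, frob_smul_left, frob_smul_right, hCadj]
  · rw [LinearMap.smul_apply, hCsym, LinearMap.smul_apply]
  · rw [LinearMap.smul_apply, transpose_smul, hCT]
  · rw [LinearMap.smul_apply, frob_smul_right]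
    exact mul_pos hc (hCpos S hS hS0)

theorem dotProduct_acousticTensor (hC : ∀ A, (C A).IsSymm) (n a b : Fin d → ℝ) :
    b ⬝ᵥ acousticTensor C n a
      = frob (symPart (vecMulVec b n)) (C (symPart (vecMulVec a n))) :=
  (frob_symPart_vecMulVec (hC _) b n).symm

theorem IsStiffness.dotProduct_acousticTensor_pos (hC : IsStiffness C) {n : Fin d → ℝ}
    (hn : n ≠ 0) {v : Fin d → ℝ} (hv : v ≠ 0) : 0 < v ⬝ᵥ acousticTensor C n v := by
  rw [dotProduct_acousticTensor hC.2.2.1]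
  exact hC.2.2.2 _ (isSymm_symPart _) (symPart_vecMulVec_ne_zero hv hn)

end AcousticTensor

section Energy

variable {d : ℕ}

/-- The Hooke elastic energy `ψ(ε) = ½⟨ε - εB, C(ε - εB)⟩` of a phase with stiffness `C` and
Bain strain `εB`. -/
noncomputable def hookeEnergy (C : Matrix (Fin d) (Fin d) ℝ →ₗ[ℝ] Matrix (Fin d) (Fin d) ℝ)
    (εB ε : Matrix (Fin d) (Fin d) ℝ) : ℝ :=
  1 / 2 * frob (ε - εB) (C (ε - εB))

/-- The strain `s⁻¹ (G + c (a ⊗ n)ˢʸᵐ)`: it is `ε_{αβ}(a)` for `c = -φ_β` and `ε_{βα}(a)` for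
`c = φ_α`, where `s = φ_α + φ_β`. -/
noncomputable def pairStrain (s c : ℝ) (G : Matrix (Fin d) (Fin d) ℝ) (n a : Fin d → ℝ) :
    Matrix (Fin d) (Fin d) ℝ :=
  s⁻¹ • (G + c • symPart (vecMulVec a n))

theorem pairStrain_add (s c : ℝ) (G : Matrix (Fin d) (Fin d) ℝ) (n a v : Fin d → ℝ) :
    pairStrain s c G n (a + v) = pairStrain s c G n a + (c / s) • symPart (vecMulVec v n) := by
  rw [pairStrain, pairStrain, add_vecMulVec, symPart_add]
  module

theorem smul_map_pairStrain_sub (C : Matrix (Fin d) (Fin d) ℝ →ₗ[ℝ] Matrix (Fin d) (Fin d) ℝ)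
    (εB G : Matrix (Fin d) (Fin d) ℝ) {s : ℝ} (hs : s ≠ 0) (c : ℝ) (n a : Fin d → ℝ) :
    s • C (pairStrain s c G n a - εB)
      = C (G - s • εB) + c • C (symPart (vecMulVec a n)) := by
  rw [← map_smul, ← map_smul, ← map_add, pairStrain, smul_sub, smul_inv_smul₀ hs,
    sub_add_eq_add_sub]

theorem hookeEnergy_add_smul {C : Matrix (Fin d) (Fin d) ℝ →ₗ[ℝ] Matrix (Fin d) (Fin d) ℝ}
    (hC : ∀ A B, frob (C A) B = frob A (C B)) (εB ε η : Matrix (Fin d) (Fin d) ℝ) (c : ℝ) :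
    hookeEnergy C εB (ε + c • η)
      = hookeEnergy C εB ε + c * frob η (C (ε - εB)) + c ^ 2 / 2 * frob η (C η) := by
  have hcross : frob (ε - εB) (C η) = frob η (C (ε - εB)) := by rw [← hC, frob_comm]
  simp only [hookeEnergy, add_sub_right_comm, map_add, map_smul, frob_add_left, frob_add_right,
    frob_smul_left, frob_smul_right, hcross]
  ring

variable {Cα Cβ : Matrix (Fin d) (Fin d) ℝ →ₗ[ℝ] Matrix (Fin d) (Fin d) ℝ} {p q : ℝ}

theorem pairEnergy_eq_hookeEnergy (εαB εβB G : Matrix (Fin d) (Fin d) ℝ) (n a : Fin d → ℝ) :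
    pairEnergy Cα Cβ εαB εβB p q G n a
      = p / (p + q) * hookeEnergy Cα εαB (pairStrain (p + q) (-q) G n a)
        + q / (p + q) * hookeEnergy Cβ εβB (pairStrain (p + q) p G n a) := by
  simp only [pairEnergy, hookeEnergy, pairStrain, neg_smul, ← sub_eq_add_neg]

theorem smul_traction_jump (hs : p + q ≠ 0) (εαB εβB G : Matrix (Fin d) (Fin d) ℝ)
    (n a : Fin d → ℝ) :
    (p + q) • ((Cβ (pairStrain (p + q) p G n a - εβB)
        - Cα (pairStrain (p + q) (-q) G n a - εαB)) *ᵥ n)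
      = acousticTensor (q • Cα + p • Cβ) n a
        + (Cβ (G - (p + q) • εβB) - Cα (G - (p + q) • εαB)) *ᵥ n := by
  change _ = (q • Cα + p • Cβ) (symPart (vecMulVec a n)) *ᵥ n + _
  rw [← smul_mulVec, ← add_mulVec, smul_sub, smul_map_pairStrain_sub _ _ _ hs,
    smul_map_pairStrain_sub _ _ _ hs, LinearMap.add_apply, LinearMap.smul_apply,
    LinearMap.smul_apply]
  congr 1
  module

theorem pairEnergy_add (hs : p + q ≠ 0)
    (hCα : ∀ A B, frob (Cα A) B = frob A (Cα B)) (hCαT : ∀ A, (Cα A).IsSymm)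
    (hCβ : ∀ A B, frob (Cβ A) B = frob A (Cβ B)) (hCβT : ∀ A, (Cβ A).IsSymm)
    (εαB εβB G : Matrix (Fin d) (Fin d) ℝ) (n a v : Fin d → ℝ) :
    pairEnergy Cα Cβ εαB εβB p q G n (a + v) = pairEnergy Cα Cβ εαB εβB p q G n a
      + p * q / (p + q) ^ 3 *
        (v ⬝ᵥ (acousticTensor (q • Cα + p • Cβ) n a
            + (Cβ (G - (p + q) • εβB) - Cα (G - (p + q) • εαB)) *ᵥ n)
          + 1 / 2 * (v ⬝ᵥ acousticTensor (q • Cα + p • Cβ) n v)) := by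
  set η := symPart (vecMulVec v n)
  set σα := Cα (pairStrain (p + q) (-q) G n a - εαB)
  set σβ := Cβ (pairStrain (p + q) p G n a - εβB)
  have hlinear : v ⬝ᵥ (acousticTensor (q • Cα + p • Cβ) n a
      + (Cβ (G - (p + q) • εβB) - Cα (G - (p + q) • εαB)) *ᵥ n)
      = (p + q) * (frob η σβ - frob η σα) := by
    rw [← smul_traction_jump hs, dotProduct_smul, smul_eq_mul,
      ← frob_symPart_vecMulVec ((hCβT _).sub (hCαT _)), frob_sub_right]
  have hquadratic : v ⬝ᵥ acousticTensor (q • Cα + p • Cβ) n v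
      = q * frob η (Cα η) + p * frob η (Cβ η) := by
    rw [dotProduct_acousticTensor fun A => ((hCαT A).smul q).add ((hCβT A).smul p),
      LinearMap.add_apply, LinearMap.smul_apply, LinearMap.smul_apply, frob_add_right,
      frob_smul_right, frob_smul_right]
  rw [hlinear, hquadratic, pairEnergy_eq_hookeEnergy, pairEnergy_eq_hookeEnergy,
    pairStrain_add, pairStrain_add, hookeEnergy_add_smul hCα, hookeEnergy_add_smul hCβ]
  field_simp
  ring

end Energy

theorem closed_form_pairwise_jump_vector_general {d : ℕ}
    {Cα Cβ : Matrix (Fin d) (Fin d) ℝ →ₗ[ℝ] Matrix (Fin d) (Fin d) ℝ}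
    (hCα : ∀ A B, frob (Cα A) B = frob A (Cα B)) (hCαT : ∀ A, (Cα A)ᵀ = Cα A)
    (hCβ : ∀ A B, frob (Cβ A) B = frob A (Cβ B)) (hCβT : ∀ A, (Cβ A)ᵀ = Cβ A)
    {φα φβ : ℝ} (hφα : 0 < φα) (hφβ : 0 < φβ) {n : Fin d → ℝ}
    (hQ : ∀ v, v ≠ 0 → 0 < v ⬝ᵥ acousticTensor (φβ • Cα + φα • Cβ) n v)
    (εαB εβB G : Matrix (Fin d) (Fin d) ℝ) :
    ∃ astar : Fin d → ℝ,
      acousticTensor (φβ • Cα + φα • Cβ) n astar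
          = -((Cβ (G - (φα + φβ) • εβB) - Cα (G - (φα + φβ) • εαB)) *ᵥ n)
        ∧ (∀ b, pairEnergy Cα Cβ εαB εβB φα φβ G n astar
            ≤ pairEnergy Cα Cβ εαB εβB φα φβ G n b)
        ∧ (∀ a, (∀ b, pairEnergy Cα Cβ εαB εβB φα φβ G n a
            ≤ pairEnergy Cα Cβ εαB εβB φα φβ G n b) → a = astar) := by
  have hκ : 0 < φα * φβ / (φα + φβ) ^ 3 := by positivity
  obtain ⟨astar, hastar, hlt⟩ := exists_strict_minimizer_of_quadratic_expansion hκ hQ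
    (pairEnergy_add (add_pos hφα hφβ).ne' hCα hCαT hCβ hCβT εαB εβB G n)
  refine ⟨astar, hastar, fun b => ?_, fun a ha => ?_⟩
  · rcases eq_or_ne b astar with rfl | hb
    exacts [le_rfl, (hlt b hb).le]
  · by_contra hne
    exact (hlt a hne).not_ge (ha astar)

/-- closed-form pairwise jump vector, general stiffnesses: the pairwise
interface energy has a unique global minimizer `a*`, given explicitly by
`a* = −Q⁻¹ ([C_β(ε − Σ φ_i ε_i − s ε_β^B) − C_α(ε − Σ φ_i ε_i − s ε_α^B)] n̂)`,
where `Q` is the acoustic tensor of `φ_β C_α + φ_α C_β`. -/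
theorem closed_form_pairwise_jump_vector {d n : ℕ} (hn : 2 ≤ n)
    (α β : Fin n) (hαβ : α ≠ β)
    (φ : Fin n → ℝ) (hφ0 : ∀ i, 0 ≤ φ i) (hφsum : ∑ i, φ i = 1)
    (hφα : 0 < φ α) (hφβ : 0 < φ β)
    (ε : Matrix (Fin d) (Fin d) ℝ) (hε : εᵀ = ε)
    (εo : Fin n → Matrix (Fin d) (Fin d) ℝ) (hεo : ∀ i, (εo i)ᵀ = εo i)
    (εαB εβB : Matrix (Fin d) (Fin d) ℝ) (hεαB : εαBᵀ = εαB) (hεβB : εβBᵀ = εβB)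
    (Cα Cβ : Matrix (Fin d) (Fin d) ℝ →ₗ[ℝ] Matrix (Fin d) (Fin d) ℝ)
    (hCα : IsStiffness Cα) (hCβ : IsStiffness Cβ)
    (nh : Fin d → ℝ) (hnh : nh ⬝ᵥ nh = 1) :
    ∃ astar : Fin d → ℝ,
      ((φ β • Cα + φ α • Cβ) (symPart (vecMulVec astar nh))).mulVec nh
          = -((Cβ (ε - (∑ i ∈ univ \ {α, β}, φ i • εo i) - (φ α + φ β) • εβB)
              - Cα (ε - (∑ i ∈ univ \ {α, β}, φ i • εo i) - (φ α + φ β) • εαB)).mulVec nh)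
        ∧ (∀ b, pairEnergy Cα Cβ εαB εβB (φ α) (φ β)
              (ε - ∑ i ∈ univ \ {α, β}, φ i • εo i) nh astar
            ≤ pairEnergy Cα Cβ εαB εβB (φ α) (φ β)
              (ε - ∑ i ∈ univ \ {α, β}, φ i • εo i) nh b)
        ∧ (∀ a, (∀ b, pairEnergy Cα Cβ εαB εβB (φ α) (φ β)
              (ε - ∑ i ∈ univ \ {α, β}, φ i • εo i) nh a
            ≤ pairEnergy Cα Cβ εαB εβB (φ α) (φ β)
              (ε - ∑ i ∈ univ \ {α, β}, φ i • εo i) nh b) → a = astar) := by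
  have hn0 : nh ≠ 0 := by
    rintro rfl
    simp at hnh
  exact closed_form_pairwise_jump_vector_general hCα.1 hCα.2.2.1 hCβ.1 hCβ.2.2.1 hφα hφβ
    (fun _ hv => ((hCα.smul hφβ).add (hCβ.smul hφα)).dotProduct_acousticTensor_pos hn0 hv) _ _ _
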